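/- arXiv:1207.4437 — 2 statements merged into one kernel-verified Lean document; each statement's English description precedes it below -/
import Mathlib

section
/- For every n ≥ 1 and every integer tuple (k_1,…,k_n) ∈ ℤ^n, the polynomial α satisfies α(n;k_1,…,k_n) = Σ_{A ∈ 𝒢_n(k_1,…,k_n)} (−1)^{sc(A)}, i.e. the evaluation of α at (k_1,…,k_n) equals the signed enumeration of Generalized Monotone Triangles with bottom row (k_1,…,k_n), where each triangle A is counted with sign (−1)^{sc(A)}. -/
/-- A triangular array of size `n`, encoded as a function `ℕ → ℕ → ℤ` whose
meaningful entries are `a i j` for `1 ≤ j ≤ i ≤ n` (row `i` has entries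
`a i 1, …, a i i`), normalized to be `0` outside this region. -/
def IsTri (n : ℕ) (a : ℕ → ℕ → ℤ) : Prop :=
  ∀ i j, ¬ (1 ≤ j ∧ j ≤ i ∧ i ≤ n) → a i j = 0

/-- A Monotone Triangle of size `n`: strict increase along rows and weak
increase along North-East and South-East diagonals. -/
def IsMT (n : ℕ) (a : ℕ → ℕ → ℤ) : Prop :=
  IsTri n a ∧
  (∀ i j, 1 ≤ j → j + 1 ≤ i → i ≤ n → a i j < a i (j + 1)) ∧
  (∀ i j, 1 ≤ j → j ≤ i → i + 1 ≤ n →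
    a (i + 1) j ≤ a i j ∧ a i j ≤ a (i + 1) (j + 1))

/-- A Generalized Monotone Triangle (GMT) of size `n`. -/
def IsGMT (n : ℕ) (a : ℕ → ℕ → ℤ) : Prop :=
  IsTri n a ∧
  -- (1) each entry is weakly bounded by its SW- and SE-neighbour
  (∀ i j, 1 ≤ j → j ≤ i → i + 1 ≤ n →
    min (a (i + 1) j) (a (i + 1) (j + 1)) ≤ a i j ∧
    a i j ≤ max (a (i + 1) j) (a (i + 1) (j + 1))) ∧
  -- (2) three weakly increasing consecutive entries force strict increase above
  (∀ i j, 1 ≤ j → j + 1 ≤ i → i + 1 ≤ n →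
    a (i + 1) j ≤ a (i + 1) (j + 1) → a (i + 1) (j + 1) ≤ a (i + 1) (j + 2) →
    a i j < a i (j + 1)) ∧
  -- (3) equality over a strict descent forces an equal neighbour
  (∀ i j, 1 ≤ j → j ≤ i → i + 1 ≤ n →
    (a i j = a (i + 1) j → a (i + 1) (j + 1) < a (i + 1) j →
      2 ≤ j ∧ a i (j - 1) = a i j) ∧
    (a (i + 1) (j + 1) < a (i + 1) j → a (i + 1) (j + 1) = a i j →
      j + 1 ≤ i ∧ a i (j + 1) = a i j))

/-- The bottom row of a triangular array of size `n` is `(k 0, …, k (n-1))`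
(1-indexed in the array). -/
def BottomRow (n : ℕ) (a : ℕ → ℕ → ℤ) (k : Fin n → ℤ) : Prop :=
  ∀ j : Fin n, a n (j.1 + 1) = k j

/-- The set of Monotone Triangles of size `n` with bottom row `k`. -/
def MTset (n : ℕ) (k : Fin n → ℤ) : Set (ℕ → ℕ → ℤ) :=
  {a | IsMT n a ∧ BottomRow n a k}

/-- The set `𝒢ₙ(k)` of Generalized Monotone Triangles of size `n` with bottom row `k`. -/
def GMTset (n : ℕ) (k : Fin n → ℤ) : Set (ℕ → ℕ → ℤ) :=
  {a | IsGMT n a ∧ BottomRow n a k}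

/-- The positions `(i, j)` of newcomers of a triangular array:
`a (i+1) j > a i j > a (i+1) (j+1)`. -/
def newcomersF (n : ℕ) (a : ℕ → ℕ → ℤ) : Finset (ℕ × ℕ) :=
  ((Finset.range (n + 1)) ×ˢ (Finset.range (n + 1))).filter (fun p =>
    1 ≤ p.2 ∧ p.2 ≤ p.1 ∧ p.1 + 1 ≤ n ∧
    a p.1 p.2 < a (p.1 + 1) p.2 ∧ a (p.1 + 1) (p.2 + 1) < a p.1 p.2)

/-- The positions `(i, j)` of sign-changing pairs `(a i j, a i (j+1))` of a
triangular array: two equal consecutive entries whose interlaced neighbour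
below is also equal to them. -/
def scPairsF (n : ℕ) (a : ℕ → ℕ → ℤ) : Finset (ℕ × ℕ) :=
  ((Finset.range (n + 1)) ×ˢ (Finset.range (n + 1))).filter (fun p =>
    1 ≤ p.2 ∧ p.2 + 1 ≤ p.1 ∧ p.1 + 1 ≤ n ∧
    a p.1 p.2 = a p.1 (p.2 + 1) ∧ a (p.1 + 1) (p.2 + 1) = a p.1 p.2)

/-- `sc(A)`: the total number of newcomers and sign-changing pairs of `A`. -/
def scT (n : ℕ) (a : ℕ → ℕ → ℤ) : ℕ :=
  (newcomersF n a).card + (scPairsF n a).card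

/-- `IsAlpha N f` asserts that `f` is the polynomial function
`α(N; k₁, …, k_N)`: it is given by a polynomial with rational coefficients of
degree at most `N - 1` in each variable, and its value at every strictly
increasing integer sequence equals the number of Monotone Triangles with that
bottom row. -/
def IsAlpha (N : ℕ) (f : (Fin N → ℤ) → ℚ) : Prop :=
  (∃ P : MvPolynomial (Fin N) ℚ, (∀ i : Fin N, P.degreeOf i ≤ N - 1) ∧
    ∀ k : Fin N → ℤ, f k = MvPolynomial.eval (fun i => (k i : ℚ)) P) ∧
  (∀ k : Fin N → ℤ, StrictMono k → f k = ((MTset N k).ncard : ℚ))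

/-- The extended sum `∑_{l=a}^b h l`, with value `-∑_{b < l < a} h l` when `b < a`. -/
noncomputable def extSum (a b : ℤ) (h : ℤ → ℚ) : ℚ :=
  if a ≤ b then ∑ l ∈ Finset.Icc a b, h l else -∑ l ∈ Finset.Ioo b a, h l

/-- Contribution of an entry `l` above the consecutive entries `b, c`. -/
def edgeWt (b c l : ℤ) : ℚ :=
  if c < b then if c < l ∧ l < b then -1 else if c ≤ l ∧ l ≤ b then 1 else 0
  else if b ≤ l ∧ l ≤ c then 1 else 0

/-- Contribution of consecutive entries `l, l'` above the consecutive entries `a, b, c`. -/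
def vertexWt (a b c l l' : ℤ) : ℚ :=
  if l = b then
    if l' = b then if a ≤ b ∧ b ≤ c then 0 else -1
    else if b < a then 0 else 1
  else if l' = b ∧ c < b then 0 else 1

theorem extSum_add (a b : ℤ) (g h : ℤ → ℚ) :
    extSum a b (fun l => g l + h l) = extSum a b g + extSum a b h := by
  unfold extSum; split_ifs <;> rw [Finset.sum_add_distrib]; ring

theorem extSum_mul_left (a b : ℤ) (r : ℚ) (h : ℤ → ℚ) :
    extSum a b (fun l => r * h l) = r * extSum a b h := by
  unfold extSum; split_ifs <;> rw [← Finset.mul_sum]; ring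

theorem sum_Icc_telescope (F : ℤ → ℚ) (a : ℤ) (m : ℕ) :
    ∑ l ∈ Finset.Icc a (a + m - 1), (F (l + 1) - F l) = F (a + m) - F a := by
  induction m with
  | zero => simp
  | succ m ih =>
    have : Finset.Icc a (a + (m + 1 : ℕ) - 1) = insert (a + m) (Finset.Icc a (a + m - 1)) := by
      ext t; simp only [Finset.mem_Icc, Finset.mem_insert]; omega
    rw [this, Finset.sum_insert (by simp), ih]
    push_cast; rw [← add_assoc]; ring

theorem extSum_telescope (F : ℤ → ℚ) (a b : ℤ) :
    extSum a b (fun l => F (l + 1) - F l) = F (b + 1) - F a := by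
  unfold extSum
  split_ifs with h
  · obtain ⟨m, hm⟩ := Int.eq_ofNat_of_zero_le (show 0 ≤ b + 1 - a by omega)
    have := sum_Icc_telescope F a m
    rw [← hm] at this
    convert this using 3 <;> ring
  · obtain ⟨m, hm⟩ := Int.eq_ofNat_of_zero_le (show 0 ≤ a - (b + 1) by omega)
    have := sum_Icc_telescope F (b + 1) m
    rw [← hm] at this
    have e : Finset.Ioo b a = Finset.Icc (b + 1) (b + 1 + (a - (b + 1)) - 1) := by
      ext t; simp only [Finset.mem_Icc, Finset.mem_Ioo]; omega
    rw [e, this, neg_sub]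
    congr 2; ring

theorem exists_polynomial_extSum_pow (e : ℕ) :
    ∃ F : Polynomial ℚ, ∀ a b : ℤ,
      extSum a b (fun l => (l : ℚ) ^ e) = F.eval ((b : ℚ) + 1) - F.eval (a : ℚ) := by
  refine ⟨Polynomial.C ((e + 1 : ℚ)⁻¹) * Polynomial.bernoulli (e + 1), fun a b => ?_⟩
  set F := Polynomial.C ((e + 1 : ℚ)⁻¹) * Polynomial.bernoulli (e + 1) with hF
  have := extSum_telescope (fun l => F.eval (l : ℚ)) a b
  push_cast at this
  rw [← this]
  congr 1; funext l
  rw [hF, Polynomial.eval_mul, Polynomial.eval_mul, add_comm (l : ℚ) 1,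
    Polynomial.bernoulli_eval_one_add]
  have : (e + 1 : ℚ) ≠ 0 := by positivity
  simp
  field_simp
  ring

/-- One step of the left-to-right evaluation of the signed sum over rows. -/
theorem sum_uIcc_vertexWt_mul_edgeWt (a b c p : ℤ) (h : ℤ → ℚ) (d : ℚ)
    (hd : p = b → b = c → d = 0) :
    ∑ l ∈ Finset.uIcc b c, vertexWt a b c p l * edgeWt b c l *
        ((if c < b ∧ l = c then 0 else h l) - if l = c then d else 0) =
      (if b < a ∧ p = b then 0 else extSum b c h - d) - if p = b then h b else 0 := by
  rcases le_or_gt b c with hbc | hbc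
  · rw [Finset.uIcc_of_le hbc]
    by_cases hp : b < a ∧ p = b
    · rw [Finset.sum_eq_single b]
      · obtain ⟨h1, rfl⟩ := hp
        rcases eq_or_ne p c with rfl | hpc
        · simp [vertexWt, edgeWt, h1, hd]
        · simp [vertexWt, edgeWt, h1, hpc, hbc, not_lt.2 hbc]
      · intro l hl hlb
        simp [vertexWt, hp, hlb]
      · simp [hbc]
    · have key : ∀ l ∈ Finset.Icc b c, vertexWt a b c p l * edgeWt b c l *
          ((if c < b ∧ l = c then 0 else h l) - if l = c then d else 0) =
          h l - (if l = c then d else 0) - if l = b then (if p = b then h b else 0) else 0 := by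
        intro l hl
        rw [Finset.mem_Icc] at hl
        have e1 : edgeWt b c l = 1 := by simp [edgeWt, not_lt.2 hbc, hl]
        have e2 : vertexWt a b c p l = if p = b ∧ l = b then 0 else 1 := by
          unfold vertexWt; grind
        rw [e1, e2]
        by_cases hpb : p = b <;> by_cases hlb : l = b <;> by_cases hlc : l = c <;>
          simp [hpb, hlb, hlc, not_lt.2 hbc] <;> grind
      rw [Finset.sum_congr rfl key, Finset.sum_sub_distrib, Finset.sum_sub_distrib,
        Finset.sum_ite_eq', Finset.sum_ite_eq', if_neg hp]
      simp [hbc, extSum]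
  · rw [Finset.uIcc_of_ge hbc.le]
    have e : Finset.Icc c b = insert c (insert b (Finset.Ioo c b)) := by
      ext t; simp only [Finset.mem_Icc, Finset.mem_insert, Finset.mem_Ioo]; omega
    have key : ∀ l ∈ Finset.Ioo c b, vertexWt a b c p l * edgeWt b c l *
          ((if c < b ∧ l = c then 0 else h l) - if l = c then d else 0) =
          (if b < a ∧ p = b then 0 else - h l) := by
      intro l hl
      rw [Finset.mem_Ioo] at hl
      have e1 : edgeWt b c l = -1 := by simp [edgeWt, hbc, hl]
      have e2 : vertexWt a b c p l = if b < a ∧ p = b then 0 else 1 := by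
        unfold vertexWt; grind
      rw [e1, e2, if_neg (show ¬(c < b ∧ l = c) by omega), if_neg (show ¬l = c by omega)]
      split_ifs <;> ring
    rw [e, Finset.sum_insert (by simp [hbc.ne]), Finset.sum_insert (by simp),
      Finset.sum_congr rfl key]
    unfold extSum
    by_cases hp : p = b <;> by_cases ha : b < a <;>
      simp [vertexWt, edgeWt, hp, ha, hbc, hbc.ne, hbc.ne', hbc.le, not_le.2 hbc, sub_eq_add_neg,
        add_comm, add_left_comm]

/-- The recursive summation operator over the rows above `x`. -/
noncomputable def rowOp : (m : ℕ) → (Fin (m + 1) → ℤ) → ((Fin m → ℤ) → ℚ) → ℚ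
  | 0, _, A => A default
  | 1, x, A => extSum (x 0) (x 1) fun l => A (Fin.cons l default)
  | m + 2, x, A =>
    extSum (x 0) (x 1) (fun l => rowOp (m + 1) (Fin.tail x) fun y => A (Fin.cons l y)) -
      rowOp m (Fin.tail (Fin.tail x)) fun y => A (Fin.cons (x 1) (Fin.cons (x 1) y))

/-- The value of `rowOp` on the rows whose first entry equals `x 0`. -/
noncomputable def rowOpFixed : (m : ℕ) → (Fin (m + 1) → ℤ) → ((Fin m → ℤ) → ℚ) → ℚ
  | 0, _, _ => 0
  | m + 1, x, A => rowOp m (Fin.tail x) fun y => A (Fin.cons (x 0) y)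

theorem rowOp_succ (m : ℕ) (x : Fin (m + 2) → ℤ) (A : (Fin (m + 1) → ℤ) → ℚ) :
    rowOp (m + 1) x A =
      extSum (x 0) (x 1) (fun l => rowOp m (Fin.tail x) fun y => A (Fin.cons l y)) -
        rowOpFixed m (Fin.tail x) fun y => A (Fin.cons (x 1) y) := by
  cases m with
  | zero => simp [rowOp, rowOpFixed]
  | succ m => rfl

theorem rowOp_add (m : ℕ) (x : Fin (m + 1) → ℤ) (A B : (Fin m → ℤ) → ℚ) :
    rowOp m x (fun y => A y + B y) = rowOp m x A + rowOp m x B := by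
  induction m using Nat.strong_induction_on with
  | _ m ih =>
    match m, ih with
    | 0, _ => simp [rowOp]
    | 1, _ => simp only [rowOp, extSum_add]
    | m + 2, ih =>
      simp only [rowOp, ih (m + 1) (by omega), ih m (by omega), extSum_add]
      ring

theorem rowOp_mul_left (m : ℕ) (x : Fin (m + 1) → ℤ) (r : ℚ) (A : (Fin m → ℤ) → ℚ) :
    rowOp m x (fun y => r * A y) = r * rowOp m x A := by
  induction m using Nat.strong_induction_on with
  | _ m ih =>
    match m, ih with
    | 0, _ => simp [rowOp]
    | 1, _ => simp only [rowOp, extSum_mul_left]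
    | m + 2, ih =>
      simp only [rowOp, ih (m + 1) (by omega), ih m (by omega), extSum_mul_left]
      ring

theorem rowOp_zero (m : ℕ) (x : Fin (m + 1) → ℤ) : rowOp m x (fun _ => 0) = 0 := by
  simpa using rowOp_mul_left m x 0 (fun _ => 0)

/-- The signed weight of a row `y` above the row `x`, where `a` and `p` are the entries
preceding `x` and `y`. -/
def rowWt : (m : ℕ) → ℤ → ℤ → (Fin (m + 1) → ℤ) → (Fin m → ℤ) → ℚ
  | 0, a, p, x, _ => if x 0 < a ∧ p = x 0 then 0 else 1
  | m + 1, a, p, x, y =>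
    vertexWt a (x 0) (x 1) p (y 0) * edgeWt (x 0) (x 1) (y 0) *
      rowWt m (x 0) (y 0) (Fin.tail x) (Fin.tail y)

/-- The finite set of rows `y` whose entries lie between neighbouring entries of `x`. -/
def rowBox (m : ℕ) (x : Fin (m + 1) → ℤ) : Finset (Fin m → ℤ) :=
  Fintype.piFinset fun i => Finset.uIcc (x i.castSucc) (x i.succ)

theorem sum_rowBox_succ (m : ℕ) (x : Fin (m + 2) → ℤ) (F : (Fin (m + 1) → ℤ) → ℚ) :
    ∑ y ∈ rowBox (m + 1) x, F y =
      ∑ l ∈ Finset.uIcc (x 0) (x 1), ∑ y ∈ rowBox m (Fin.tail x), F (Fin.cons l y) := by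
  rw [← Finset.sum_product']
  refine Finset.sum_nbij' (fun y => (y 0, Fin.tail y)) (fun p => Fin.cons p.1 p.2) ?_ ?_ ?_ ?_ ?_
  · intro y hy
    simp only [rowBox, Fintype.mem_piFinset, Finset.mem_product] at hy ⊢
    exact ⟨hy 0, fun i => hy i.succ⟩
  · intro p hp
    simp only [rowBox, Fintype.mem_piFinset, Finset.mem_product] at hp ⊢
    exact fun i => Fin.cases hp.1 (fun j => hp.2 j) i
  · intro y _; simp
  · intro p _; simp
  · intro y _; simp

/-- `A` vanishes on rows with three consecutive equal entries. -/
def VanishesOnTriples (m : ℕ) (A : (Fin m → ℤ) → ℚ) : Prop :=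
  ∀ y : Fin m → ℤ, ∀ j, ∀ h : j + 2 < m, y ⟨j, by omega⟩ = y ⟨j + 1, by omega⟩ →
    y ⟨j + 1, by omega⟩ = y ⟨j + 2, h⟩ → A y = 0

theorem VanishesOnTriples.cons {m : ℕ} {A : (Fin (m + 1) → ℤ) → ℚ}
    (hA : VanishesOnTriples (m + 1) A) (l : ℤ) :
    VanishesOnTriples m fun y => A (Fin.cons l y) :=
  fun y j h h₁ h₂ => hA (Fin.cons l y) (j + 1) (by omega) h₁ h₂

theorem sum_rowWt_eq (m : ℕ) (a p : ℤ) (x : Fin (m + 1) → ℤ) (A : (Fin m → ℤ) → ℚ)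
    (hA : VanishesOnTriples m A)
    (hp : ∀ h : 1 < m, ∀ y : Fin m → ℤ, p = x 0 → y ⟨0, by omega⟩ = p → y ⟨1, h⟩ = p → A y = 0) :
    ∑ y ∈ rowBox m x, rowWt m a p x y * A y =
      (if x 0 < a ∧ p = x 0 then 0 else rowOp m x A) -
        if p = x 0 then rowOpFixed m x A else 0 := by
  induction m generalizing a p with
  | zero =>
    have : rowBox 0 x = {default} := by
      ext y
      simp only [rowBox, Fintype.mem_piFinset, Finset.mem_singleton]
      exact ⟨fun _ => Subsingleton.elim _ _, fun _ i => i.elim0⟩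
    rw [this, Finset.sum_singleton, rowWt, rowOp, rowOpFixed]
    split_ifs <;> simp
  | succ m ih =>
    rw [sum_rowBox_succ]
    have step : ∀ l ∈ Finset.uIcc (x 0) (x 1),
        ∑ y ∈ rowBox m (Fin.tail x), rowWt (m + 1) a p x (Fin.cons l y) * A (Fin.cons l y) =
        vertexWt a (x 0) (x 1) p l * edgeWt (x 0) (x 1) l *
          ((if x 1 < x 0 ∧ l = x 1 then 0 else
              rowOp m (Fin.tail x) fun y => A (Fin.cons l y)) -
            if l = x 1 then rowOpFixed m (Fin.tail x) fun y => A (Fin.cons (x 1) y) else 0) := by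
      intro l _
      have := ih (x 0) l (Fin.tail x) (fun y => A (Fin.cons l y)) (hA.cons l) (by
        intro h y _ h₁ h₂
        have h' : 0 + 2 < m + 1 := by omega
        exact hA (Fin.cons l y) 0 h' h₁.symm (h₁.trans h₂.symm))
      rw [show (Fin.tail x : Fin (m + 1) → ℤ) 0 = x 1 from rfl] at this
      simp only [rowWt, Fin.cons_zero, Fin.tail_cons, mul_assoc, ← Finset.mul_sum]
      rw [this]
      by_cases hl : l = x 1
      · subst hl; rfl
      · simp [hl]
    rw [Finset.sum_congr rfl step, sum_uIcc_vertexWt_mul_edgeWt, rowOp_succ]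
    · rfl
    · intro h₁ h₂
      cases m with
      | zero => rfl
      | succ m =>
        have : ∀ y : Fin m → ℤ, A (Fin.cons (x 1) (Fin.cons (x 1) y)) = 0 := by
          intro y
          have h : 1 < m + 1 + 1 := by omega
          exact hp h _ h₁ (h₂.symm.trans h₁.symm) (h₂.symm.trans h₁.symm)
        change rowOp m _ (fun y => A (Fin.cons (x 1) (Fin.cons (x 1) y))) = 0
        simp only [this, rowOp_zero]

theorem sum_rowWt_start (m : ℕ) (x : Fin (m + 1) → ℤ) (A : (Fin m → ℤ) → ℚ)
    (hA : VanishesOnTriples m A) :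
    ∑ y ∈ rowBox m x, rowWt m (x 0) (x 0 - 1) x y * A y = rowOp m x A := by
  rw [sum_rowWt_eq m _ _ x A hA (fun _ _ h => absurd h (by omega))]
  simp

/-- `F` is the restriction to integer points of a rational polynomial. -/
def IsPolyFun (n : ℕ) (F : (Fin n → ℤ) → ℚ) : Prop :=
  ∃ P : MvPolynomial (Fin n) ℚ, ∀ k, F k = MvPolynomial.eval (fun i => (k i : ℚ)) P

theorem IsPolyFun.add {n : ℕ} {F G : (Fin n → ℤ) → ℚ} (hF : IsPolyFun n F)
    (hG : IsPolyFun n G) : IsPolyFun n fun k => F k + G k := by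
  obtain ⟨P, hP⟩ := hF
  obtain ⟨Q, hQ⟩ := hG
  exact ⟨P + Q, fun k => by simp [hP, hQ]⟩

theorem IsPolyFun.sub {n : ℕ} {F G : (Fin n → ℤ) → ℚ} (hF : IsPolyFun n F)
    (hG : IsPolyFun n G) : IsPolyFun n fun k => F k - G k := by
  obtain ⟨P, hP⟩ := hF
  obtain ⟨Q, hQ⟩ := hG
  exact ⟨P - Q, fun k => by simp [hP, hQ]⟩

theorem IsPolyFun.mul {n : ℕ} {F G : (Fin n → ℤ) → ℚ} (hF : IsPolyFun n F)
    (hG : IsPolyFun n G) : IsPolyFun n fun k => F k * G k := by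
  obtain ⟨P, hP⟩ := hF
  obtain ⟨Q, hQ⟩ := hG
  exact ⟨P * Q, fun k => by simp [hP, hQ]⟩

theorem isPolyFun_const (n : ℕ) (r : ℚ) : IsPolyFun n fun _ => r :=
  ⟨MvPolynomial.C r, fun k => by simp⟩

theorem isPolyFun_apply_pow (n : ℕ) (i : Fin n) (e : ℕ) :
    IsPolyFun n fun k => (k i : ℚ) ^ e :=
  ⟨MvPolynomial.X i ^ e, fun k => by simp⟩

theorem IsPolyFun.tail {n : ℕ} {F : (Fin n → ℤ) → ℚ} (hF : IsPolyFun n F) :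
    IsPolyFun (n + 1) fun k => F (Fin.tail k) := by
  obtain ⟨P, hP⟩ := hF
  exact ⟨MvPolynomial.rename Fin.succ P, fun k => by
    simp only [hP, MvPolynomial.eval_rename]; rfl⟩

theorem isPolyFun_polynomial_eval (n : ℕ) (i : Fin n) (F : Polynomial ℚ) (r : ℚ) :
    IsPolyFun n fun k => F.eval ((k i : ℚ) + r) := by
  refine ⟨Polynomial.aeval (MvPolynomial.X i + MvPolynomial.C r) F, fun k => ?_⟩
  rw [Polynomial.aeval_def, MvPolynomial.algebraMap_eq, Polynomial.hom_eval₂]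
  have : (MvPolynomial.eval fun i => (k i : ℚ)).comp MvPolynomial.C = RingHom.id ℚ := by
    ext; simp
  rw [this, Polynomial.eval₂_id]
  simp

theorem isPolyFun_extSum_pow (n : ℕ) (i j : Fin n) (e : ℕ) :
    IsPolyFun n fun k => extSum (k i) (k j) fun l => (l : ℚ) ^ e := by
  obtain ⟨F, hF⟩ := exists_polynomial_extSum_pow e
  simp only [hF]
  refine (isPolyFun_polynomial_eval n j F 1).sub ?_
  simpa using isPolyFun_polynomial_eval n i F 0

theorem isPolyFun_rowOp_prod (m : ℕ) (e : Fin m → ℕ) :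
    IsPolyFun (m + 1) fun x => rowOp m x fun y => ∏ i, (y i : ℚ) ^ e i := by
  induction m using Nat.strong_induction_on with
  | _ m ih =>
    match m, ih with
    | 0, _ => simpa [rowOp] using isPolyFun_const 1 1
    | 1, _ => simpa [rowOp] using isPolyFun_extSum_pow 2 0 1 (e 0)
    | m + 2, ih =>
      have h₁ := (ih (m + 1) (by omega) (Fin.tail e)).tail
      have h₂ := (ih m (by omega) (Fin.tail (Fin.tail e))).tail.tail
      have h := ((isPolyFun_extSum_pow (m + 3) 0 1 (e 0)).mul h₁).sub
        ((isPolyFun_apply_pow (m + 3) 1 (e 0 + e 1)).mul h₂)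
      convert h using 2 with x
      rw [rowOp]
      congr 1
      · rw [mul_comm, ← extSum_mul_left]
        congr 1; funext l
        simp only [Fin.prod_univ_succ (n := m + 1), Fin.cons_zero, Fin.cons_succ, rowOp_mul_left]
        exact mul_comm _ _
      · simp only [Fin.prod_univ_succ (n := m + 1), Fin.prod_univ_succ (n := m), Fin.cons_zero,
          Fin.cons_succ, rowOp_mul_left, ← mul_assoc, pow_add]
        rfl

theorem IsPolyFun.rowOp {m : ℕ} {A : (Fin m → ℤ) → ℚ} (hA : IsPolyFun m A) :
    IsPolyFun (m + 1) fun x => rowOp m x A := by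
  obtain ⟨P, hP⟩ := hA
  obtain rfl : A = fun k => MvPolynomial.eval (fun i => (k i : ℚ)) P := funext hP
  clear hP
  induction P using MvPolynomial.induction_on' with
  | monomial s r =>
    simp only [MvPolynomial.eval_monomial, Finsupp.prod_fintype _ _ (fun _ => pow_zero _),
      rowOp_mul_left]
    exact (isPolyFun_const _ r).mul (isPolyFun_rowOp_prod m s)
  | add P Q hP hQ =>
    simp only [map_add, rowOp_add]
    exact hP.add hQ

theorem IsPolyFun.eq_of_strictMono {n : ℕ} {F G : (Fin n → ℤ) → ℚ} (hF : IsPolyFun n F)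
    (hG : IsPolyFun n G) (h : ∀ k, StrictMono k → F k = G k) (k : Fin n → ℤ) : F k = G k := by
  obtain ⟨P, hP⟩ := hF.sub hG
  let p : Polynomial ℚ :=
    MvPolynomial.aeval
      (fun i : Fin n => Polynomial.C (k i : ℚ) + Polynomial.C (i : ℚ) * Polynomial.X) P
  have hp : ∀ t : ℤ, p.eval (t : ℚ) = F (fun i => k i + i * t) - G (fun i => k i + i * t) := by
    intro t
    have e := hP fun i => k i + i * t
    simp only at e
    rw [e, ← Polynomial.coe_evalRingHom, MvPolynomial.eval]
    simp only [p, MvPolynomial.aeval_def]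
    rw [MvPolynomial.hom_eval₂, MvPolynomial.coe_eval₂Hom]
    congr 1
    · ext; simp
    · funext i; simp
  obtain ⟨M, hM⟩ : ∃ M : ℤ, ∀ i j, k i - k j ≤ M := by
    obtain ⟨M, hM⟩ := (Set.finite_range fun q : Fin n × Fin n => k q.1 - k q.2).bddAbove
    exact ⟨M, fun i j => hM ⟨(i, j), rfl⟩⟩
  have hmono : ∀ t : ℤ, M < t → 0 < t → StrictMono fun i : Fin n => k i + i * t := by
    intro t ht ht0 i j hij
    have h₁ := hM i j
    have h₂ : (i : ℤ) + 1 ≤ j := by exact_mod_cast hij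
    show k i + i * t < k j + j * t
    nlinarith
  have hp0 : p = 0 := by
    refine Polynomial.eq_zero_of_infinite_isRoot p ?_
    refine Set.Infinite.mono (s := (fun t : ℤ => (t : ℚ)) '' Set.Ioi (max M 0)) ?_ ?_
    · rintro _ ⟨t, ht, rfl⟩
      have ht' := max_lt_iff.1 (Set.mem_Ioi.1 ht)
      change p.eval (t : ℚ) = 0
      rw [hp, h _ (hmono t ht'.1 ht'.2), sub_self]
    · exact (Set.Ioi_infinite _).image Int.cast_injective.injOn
  have := hp 0
  rw [hp0] at this
  simp at this
  linarith

/-- The conditions of a generalized monotone triangle on a row `Y` of length `n` above a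
row `X` of length `n + 1`. -/
def RowCond (n : ℕ) (X Y : ℕ → ℤ) : Prop :=
  (∀ j, 1 ≤ j → j ≤ n → min (X j) (X (j + 1)) ≤ Y j ∧ Y j ≤ max (X j) (X (j + 1))) ∧
  (∀ j, 1 ≤ j → j + 1 ≤ n → X j ≤ X (j + 1) → X (j + 1) ≤ X (j + 2) → Y j < Y (j + 1)) ∧
  (∀ j, 1 ≤ j → j ≤ n →
    (Y j = X j → X (j + 1) < X j → 2 ≤ j ∧ Y (j - 1) = Y j) ∧
    (X (j + 1) < X j → X (j + 1) = Y j → j + 1 ≤ n ∧ Y (j + 1) = Y j))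

theorem isGMT_iff (n : ℕ) (a : ℕ → ℕ → ℤ) :
    IsGMT n a ↔ IsTri n a ∧ ∀ i, i + 1 ≤ n → RowCond i (a (i + 1)) (a i) := by
  constructor
  · rintro ⟨h0, h1, h2, h3⟩
    exact ⟨h0, fun i hi => ⟨fun j hj hj' => h1 i j hj hj' hi,
      fun j hj hj' => h2 i j hj hj' hi, fun j hj hj' => h3 i j hj hj' hi⟩⟩
  · rintro ⟨h0, h⟩
    exact ⟨h0, fun i j hj hj' hi => (h i hi).1 j hj hj',
      fun i j hj hj' hi => (h i hi).2.1 j hj hj', fun i j hj hj' hi => (h i hi).2.2 j hj hj'⟩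

theorem RowCond.congr {n : ℕ} {X Y X' Y' : ℕ → ℤ} (hX : ∀ j, X (j + 1) = X' (j + 1))
    (hY : ∀ j, Y (j + 1) = Y' (j + 1)) (h : RowCond n X Y) : RowCond n X' Y' := by
  obtain ⟨h1, h2, h3⟩ := h
  refine ⟨fun j hj hj' => ?_, fun j hj hj' => ?_, fun j hj hj' => ?_⟩
  · obtain ⟨i, rfl⟩ : ∃ i, j = i + 1 := ⟨j - 1, by omega⟩
    simpa only [hX, hY] using h1 (i + 1) hj hj'
  · obtain ⟨i, rfl⟩ : ∃ i, j = i + 1 := ⟨j - 1, by omega⟩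
    have := h2 (i + 1) hj hj'
    rwa [hX, hX, hX (i + 2), hY, hY] at this
  · obtain ⟨i, rfl⟩ : ∃ i, j = i + 1 := ⟨j - 1, by omega⟩
    have := h3 (i + 1) hj hj'
    rw [hX, hX, hY, hY] at this
    refine ⟨fun e₁ e₂ => ?_, this.2⟩
    obtain ⟨h₁, h₂⟩ := this.1 e₁ e₂
    obtain ⟨i, rfl⟩ : ∃ t, i = t + 1 := ⟨i - 1, by omega⟩
    exact ⟨h₁, by rw [← h₂]; exact (hY i).symm⟩

/-- Shifted positions of the newcomers in the row `Y` above `X`. -/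
def rowNewcomers (n : ℕ) (X Y : ℕ → ℤ) : Finset ℕ :=
  (Finset.range n).filter fun j => Y (j + 1) < X (j + 1) ∧ X (j + 2) < Y (j + 1)

/-- Positions of the sign-changing pairs in the row `Y` above `X`. -/
def rowScPairs (n : ℕ) (X Y : ℕ → ℤ) : Finset ℕ :=
  (Finset.range n).filter fun j => 1 ≤ j ∧ Y j = Y (j + 1) ∧ X (j + 1) = Y j

/-- Number of newcomers and sign-changing pairs in the row `Y` above `X`. -/
def rowSc (n : ℕ) (X Y : ℕ → ℤ) : ℕ := (rowNewcomers n X Y).card + (rowScPairs n X Y).card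

theorem rowSc_congr (n : ℕ) {X Y X' Y' : ℕ → ℤ} (hX : ∀ j, X (j + 1) = X' (j + 1))
    (hY : ∀ j, Y (j + 1) = Y' (j + 1)) : rowSc n X Y = rowSc n X' Y' := by
  have h₁ : rowNewcomers n X Y = rowNewcomers n X' Y' := by
    unfold rowNewcomers
    refine Finset.filter_congr fun j _ => ?_
    rw [hX, hX (j + 1), hY]
  have h₂ : rowScPairs n X Y = rowScPairs n X' Y' := by
    unfold rowScPairs
    refine Finset.filter_congr fun j _ => and_congr_right fun hj => ?_
    obtain ⟨i, rfl⟩ : ∃ i, j = i + 1 := ⟨j - 1, by omega⟩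
    rw [hX, hY, hY]
  rw [rowSc, rowSc, h₁, h₂]

theorem rowWt_eq_prod (m : ℕ) (X Y : ℕ → ℤ) :
    rowWt m (X 0) (Y 0) (fun i => X (i + 1)) (fun i => Y (i + 1)) =
      (∏ j ∈ Finset.range m, vertexWt (X j) (X (j + 1)) (X (j + 2)) (Y j) (Y (j + 1)) *
        edgeWt (X (j + 1)) (X (j + 2)) (Y (j + 1))) *
      if X (m + 1) < X m ∧ Y m = X (m + 1) then 0 else 1 := by
  induction m generalizing X Y with
  | zero => simp [rowWt]
  | succ m ih =>
    have := ih (fun j => X (j + 1)) (fun j => Y (j + 1))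
    rw [Finset.prod_range_succ', mul_right_comm, ← this, mul_comm]
    rfl

theorem rowWt_eq_ite_aux (m : ℕ) (X Y : ℕ → ℤ) (hX : X 0 = X 1) (hY : Y 0 = X 1 - 1)
    [Decidable (RowCond m X Y)] :
    rowWt m (X 0) (Y 0) (fun i => X (i + 1)) (fun i => Y (i + 1)) =
      if RowCond m X Y then (-1) ^ rowSc m X Y else 0 := by
  rw [rowWt_eq_prod]
  split_ifs with hend hc hc
  · exfalso
    rcases Nat.eq_zero_or_pos m with rfl | hm
    · rw [hX] at hend; simp at hend
    · have := (hc.2.2 m hm le_rfl).2 hend.1 hend.2.symm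
      omega
  · simp
  · obtain ⟨h1, h2, h3⟩ := hc
    rw [mul_one, Finset.prod_mul_distrib, rowSc, pow_add, mul_comm, rowNewcomers, rowScPairs]
    have key : ∀ (P : ℕ → Prop) [DecidablePred P],
        (-1 : ℚ) ^ ((Finset.range m).filter P).card =
          ∏ j ∈ Finset.range m, if P j then -1 else 1 := by
      intro P _
      rw [Finset.prod_ite]; simp
    rw [key, key]
    congr 1
    · refine Finset.prod_congr rfl fun j hj => ?_
      rw [Finset.mem_range] at hj
      have := h1 (j + 1) (by omega) (by omega)
      rw [min_le_iff, le_max_iff] at this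
      unfold edgeWt
      grind
    · refine Finset.prod_congr rfl fun j hj => ?_
      rw [Finset.mem_range] at hj
      have a1 := h1 (j + 1) (by omega) (by omega)
      have a3 := h3 (j + 1) (by omega) (by omega)
      rcases Nat.eq_zero_or_pos j with rfl | hj0
      · unfold vertexWt; grind
      · have b1 := h1 j (by omega) (by omega)
        have b2 := h2 j (by omega) (by omega)
        have b3 := h3 j (by omega) (by omega)
        rw [Nat.add_sub_cancel, show j + 1 + 1 = j + 2 from rfl] at a3
        rw [show j + 1 + 1 = j + 2 from rfl] at a1
        clear h1 h2 h3 key hend hX hY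
        rw [min_le_iff, le_max_iff] at a1 b1
        generalize X j = x₀, X (j + 1) = x₁, X (j + 2) = x₂, Y j = y₀, Y (j + 1) = y₁ at *
        unfold vertexWt; grind
  · by_contra hne
    apply hc
    rw [mul_one] at hne
    have hv : ∀ j < m, vertexWt (X j) (X (j + 1)) (X (j + 2)) (Y j) (Y (j + 1)) ≠ 0 := fun j hj =>
      left_ne_zero_of_mul (Finset.prod_ne_zero_iff.1 hne j (Finset.mem_range.2 hj))
    have he : ∀ j < m, edgeWt (X (j + 1)) (X (j + 2)) (Y (j + 1)) ≠ 0 := fun j hj =>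
      right_ne_zero_of_mul (Finset.prod_ne_zero_iff.1 hne j (Finset.mem_range.2 hj))
    have h1 : ∀ j, 1 ≤ j → j ≤ m →
        min (X j) (X (j + 1)) ≤ Y j ∧ Y j ≤ max (X j) (X (j + 1)) := by
      intro j hj hj'
      obtain ⟨i, rfl⟩ : ∃ i, j = i + 1 := ⟨j - 1, by omega⟩
      have := he i hj'
      rw [min_le_iff, le_max_iff]
      unfold edgeWt at this
      grind
    refine ⟨h1, fun j hj hj' ha hb => ?_, fun j hj hj' => ⟨fun ha hb => ?_, fun ha hb => ?_⟩⟩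
    · have c1 := h1 j hj (by omega)
      have c2 := h1 (j + 1) (by omega) (by omega)
      have := hv j (by omega)
      unfold vertexWt at this
      grind
    · obtain ⟨i, rfl⟩ : ∃ i, j = i + 1 := ⟨j - 1, by omega⟩
      have := hv i hj'
      unfold vertexWt at this
      rcases Nat.eq_zero_or_pos i with rfl | hi
      · grind
      · refine ⟨by omega, ?_⟩
        rw [Nat.add_sub_cancel]
        grind
    · rcases eq_or_lt_of_le hj' with rfl | hlt
      · exact absurd ⟨ha, hb.symm⟩ hend
      · refine ⟨hlt, ?_⟩
        have := hv j hlt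
        unfold vertexWt at this
        grind

/-- The row with entries `k` in positions `1, …, n` and `0` elsewhere. -/
def rowOf (n : ℕ) (k : Fin n → ℤ) (j : ℕ) : ℤ :=
  if h : 1 ≤ j ∧ j ≤ n then k ⟨j - 1, by omega⟩ else 0

theorem rowOf_succ (n : ℕ) (k : Fin n → ℤ) (i : Fin n) : rowOf n k (i + 1) = k i := by
  have := i.2
  simp [rowOf, this]

theorem rowWt_eq_ite (m : ℕ) (x : Fin (m + 1) → ℤ) (y : Fin m → ℤ)
    [Decidable (RowCond m (rowOf (m + 1) x) (rowOf m y))] :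
    rowWt m (x 0) (x 0 - 1) x y =
      if RowCond m (rowOf (m + 1) x) (rowOf m y) then
        (-1) ^ rowSc m (rowOf (m + 1) x) (rowOf m y) else 0 := by
  classical
  set X := Function.update (rowOf (m + 1) x) 0 (x 0) with hX
  set Y := Function.update (rowOf m y) 0 (x 0 - 1) with hY
  have eX : ∀ j, X (j + 1) = rowOf (m + 1) x (j + 1) := fun j => by simp [hX]
  have eY : ∀ j, Y (j + 1) = rowOf m y (j + 1) := fun j => by simp [hY]
  have e1 : X 1 = x 0 := by rw [eX 0]; exact rowOf_succ (m + 1) x 0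
  have h := rowWt_eq_ite_aux m X Y (by rw [e1]; simp [hX]) (by rw [e1]; simp [hY])
  rw [rowSc_congr m eX eY] at h
  have hc : RowCond m X Y ↔ RowCond m (rowOf (m + 1) x) (rowOf m y) :=
    ⟨fun h => h.congr eX eY, fun h => h.congr (fun j => (eX j).symm) fun j => (eY j).symm⟩
  simp only [hc, eX, eY] at h
  convert h using 2
  · simp [hX]
  · simp [hY]
  · funext i; exact (rowOf_succ _ x i).symm
  · funext i; exact (rowOf_succ _ y i).symm

theorem bottomRow_iff {n : ℕ} {a : ℕ → ℕ → ℤ} (ha : IsTri n a) (k : Fin n → ℤ) :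
    BottomRow n a k ↔ a n = rowOf n k := by
  constructor
  · intro h
    funext j
    unfold rowOf
    split_ifs with hj
    · have := h ⟨j - 1, by omega⟩
      rwa [show j - 1 + 1 = j by omega] at this
    · exact ha n j (by omega)
  · intro h j
    rw [h, rowOf_succ]

/-- Append the row `k` to a triangular array of size `n`. -/
def extendTri (n : ℕ) (k : Fin (n + 1) → ℤ) (a : ℕ → ℕ → ℤ) (i : ℕ) : ℕ → ℤ :=
  if i = n + 1 then rowOf (n + 1) k else a i

theorem extendTri_of_le {n : ℕ} (k : Fin (n + 1) → ℤ) (a : ℕ → ℕ → ℤ) {i : ℕ} (hi : i ≤ n) :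
    extendTri n k a i = a i := if_neg (by omega)

theorem extendTri_self (n : ℕ) (k : Fin (n + 1) → ℤ) (a : ℕ → ℕ → ℤ) :
    extendTri n k a (n + 1) = rowOf (n + 1) k := if_pos rfl

theorem scT_extendTri (n : ℕ) (k : Fin (n + 1) → ℤ) (a : ℕ → ℕ → ℤ) :
    scT (n + 1) (extendTri n k a) = scT n a + rowSc n (rowOf (n + 1) k) (a n) := by
  have h₁ : newcomersF (n + 1) (extendTri n k a) = newcomersF n a ∪
      (rowNewcomers n (rowOf (n + 1) k) (a n)).image fun j => (n, j + 1) := by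
    ext ⟨i, j⟩
    simp only [newcomersF, rowNewcomers, Finset.mem_union, Finset.mem_filter, Finset.mem_product,
      Finset.mem_range, Finset.mem_image, Prod.mk.injEq]
    rcases lt_trichotomy i n with hi | rfl | hi
    · rw [extendTri_of_le k a hi.le, extendTri_of_le k a (show i + 1 ≤ n by omega)]
      grind
    · rw [extendTri_of_le k a le_rfl, extendTri_self]
      constructor
      · rintro ⟨-, hj, hj', -, h⟩
        exact Or.inr ⟨j - 1, ⟨by omega, by
          rw [show j - 1 + 1 = j by omega, show j - 1 + 2 = j + 1 by omega]; exact h⟩, rfl,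
          by omega⟩
      · rintro (h | ⟨t, ⟨ht, h⟩, -, rfl⟩)
        · omega
        · exact ⟨by omega, by omega, by omega, by omega, h⟩
    · constructor
      · rintro ⟨-, -, -, h, -⟩; omega
      · rintro (⟨-, -, -, h, -⟩ | ⟨t, -, h, -⟩) <;> omega
  have h₂ : scPairsF (n + 1) (extendTri n k a) = scPairsF n a ∪
      (rowScPairs n (rowOf (n + 1) k) (a n)).image fun j => (n, j) := by
    ext ⟨i, j⟩
    simp only [scPairsF, rowScPairs, Finset.mem_union, Finset.mem_filter, Finset.mem_product,
      Finset.mem_range, Finset.mem_image, Prod.mk.injEq]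
    rcases lt_trichotomy i n with hi | rfl | hi
    · rw [extendTri_of_le k a hi.le, extendTri_of_le k a (show i + 1 ≤ n by omega)]
      grind
    · rw [extendTri_of_le k a le_rfl, extendTri_self]
      constructor
      · rintro ⟨-, hj, hj', -, h⟩
        exact Or.inr ⟨j, ⟨by omega, hj, h⟩, rfl, rfl⟩
      · rintro (h | ⟨t, ⟨ht, ht', h⟩, -, rfl⟩)
        · omega
        · exact ⟨by omega, ht', by omega, by omega, h⟩
    · constructor
      · rintro ⟨-, -, -, h, -⟩; omega
      · rintro (⟨-, -, -, h, -⟩ | ⟨t, -, h, -⟩) <;> omega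
  rw [scT, h₁, h₂, Finset.card_union_of_disjoint, Finset.card_union_of_disjoint,
    Finset.card_image_of_injective, Finset.card_image_of_injective, scT, rowSc]
  · ring
  · intro i j h; simpa using h
  · intro i j h; simpa using h
  · rw [Finset.disjoint_left]
    rintro ⟨i, j⟩ h h'
    simp only [scPairsF, Finset.mem_filter, Finset.mem_image, Prod.mk.injEq] at h h'
    obtain ⟨t, -, h', -⟩ := h'
    omega
  · rw [Finset.disjoint_left]
    rintro ⟨i, j⟩ h h'
    simp only [newcomersF, Finset.mem_filter, Finset.mem_image, Prod.mk.injEq] at h h'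
    obtain ⟨t, -, h', -⟩ := h'
    omega

open Classical in
/-- The admissible rows above the row `k`. -/
noncomputable def admissibleRows (n : ℕ) (k : Fin (n + 1) → ℤ) : Finset (Fin n → ℤ) :=
  (rowBox n k).filter fun y => RowCond n (rowOf (n + 1) k) (rowOf n y)

theorem GMTset_succ (n : ℕ) (k : Fin (n + 1) → ℤ) :
    GMTset (n + 1) k = ⋃ y ∈ admissibleRows n k, extendTri n k '' GMTset n y := by
  ext b
  simp only [Set.mem_iUnion, Set.mem_image, exists_prop, admissibleRows, Finset.mem_filter]
  constructor
  · rintro ⟨hb, hrow⟩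
    obtain ⟨htri, hcond⟩ := (isGMT_iff _ _).1 hb
    rw [bottomRow_iff htri] at hrow
    set y : Fin n → ℤ := fun i => b n (i + 1) with hy
    set a : ℕ → ℕ → ℤ := fun i => if i = n + 1 then 0 else b i with ha
    have hle : ∀ i, i ≤ n → a i = b i := fun i hi => if_neg (by omega)
    have hatri : IsTri n a := by
      intro i j hij
      by_cases hi : i = n + 1
      · simp [ha, hi]
      · simp only [ha, hi, if_false]
        exact htri i j (by omega)
    have hay : a n = rowOf n y := (bottomRow_iff hatri y).1 fun j => by rw [hle n le_rfl]
    have hc := hcond n le_rfl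
    rw [hrow, ← hle n le_rfl, hay] at hc
    refine ⟨y, ⟨?_, hc⟩, a, ⟨(isGMT_iff _ _).2 ⟨hatri, fun i hi => ?_⟩,
      (bottomRow_iff hatri y).2 hay⟩, ?_⟩
    · rw [rowBox, Fintype.mem_piFinset]
      intro i
      have := hc.1 (i + 1) (by omega) (by omega)
      rw [rowOf_succ] at this
      rw [← rowOf_succ _ k, ← rowOf_succ _ k]
      exact Finset.mem_Icc.2 this
    · rw [hle i (by omega), hle (i + 1) hi]
      exact hcond i (by omega)
    · funext i
      by_cases hi : i = n + 1
      · subst hi; rw [extendTri_self, hrow]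
      · simp [extendTri, hi, ha]
  · rintro ⟨y, ⟨-, hc⟩, a, ⟨ha, hrow⟩, rfl⟩
    obtain ⟨htri, hcond⟩ := (isGMT_iff _ _).1 ha
    rw [bottomRow_iff htri] at hrow
    have htri' : IsTri (n + 1) (extendTri n k a) := by
      intro i j hij
      by_cases hi : i = n + 1
      · subst hi
        rw [extendTri_self, rowOf, dif_neg (by omega)]
      · simp only [extendTri, hi, if_false]
        exact htri i j (by omega)
    refine ⟨(isGMT_iff _ _).2 ⟨htri', fun i hi => ?_⟩,
      (bottomRow_iff htri' k).2 (extendTri_self n k a)⟩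
    rcases eq_or_lt_of_le (show i ≤ n by omega) with rfl | hlt
    · rw [extendTri_self, extendTri_of_le k a le_rfl, hrow]
      exact hc
    · rw [extendTri_of_le k a hlt.le, extendTri_of_le k a hlt]
      exact hcond i hlt

theorem GMTset_zero (k : Fin 0 → ℤ) : GMTset 0 k = {0} := by
  ext a
  simp only [GMTset, Set.mem_ofPred_eq, Set.mem_singleton_iff, isGMT_iff]
  constructor
  · rintro ⟨⟨h, -⟩, -⟩
    funext i j
    exact h i j (by omega)
  · rintro rfl
    exact ⟨⟨fun _ _ _ => rfl, fun i hi => by omega⟩, fun j => j.elim0⟩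

theorem GMTset_finite (n : ℕ) (k : Fin n → ℤ) : (GMTset n k).Finite := by
  induction n with
  | zero => rw [GMTset_zero]; exact Set.finite_singleton _
  | succ n ih =>
    rw [GMTset_succ]
    exact (admissibleRows n k).finite_toSet.biUnion fun y _ => (ih y).image _

/-- The signed enumeration of generalized monotone triangles with bottom row `k`. -/
noncomputable def signedGMT (n : ℕ) (k : Fin n → ℤ) : ℚ :=
  ∑ᶠ a ∈ GMTset n k, (-1 : ℚ) ^ scT n a

theorem row_eq_of_mem_GMTset {n : ℕ} {k : Fin n → ℤ} {a : ℕ → ℕ → ℤ} (ha : a ∈ GMTset n k) :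
    a n = rowOf n k := (bottomRow_iff ha.1.1 k).1 ha.2

theorem extendTri_injOn (n : ℕ) (k : Fin (n + 1) → ℤ) :
    Set.InjOn (extendTri n k) {a | IsTri n a} := by
  intro a ha b hb h
  funext i j
  by_cases hi : i ≤ n
  · rw [← extendTri_of_le k a hi, ← extendTri_of_le k b hi, h]
  · rw [ha i j (by omega), hb i j (by omega)]

theorem signedGMT_succ_eq_sum (n : ℕ) (k : Fin (n + 1) → ℤ) :
    signedGMT (n + 1) k =
      ∑ y ∈ rowBox n k, rowWt n (k 0) (k 0 - 1) k y * signedGMT n y := by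
  classical
  have hdisj : (↑(admissibleRows n k) : Set (Fin n → ℤ)).PairwiseDisjoint
      fun y => extendTri n k '' GMTset n y := by
    intro y _ z _ hyz
    rw [Function.onFun, Set.disjoint_left]
    rintro _ ⟨a, ha, rfl⟩ ⟨b, hb, hab⟩
    apply hyz
    have h : rowOf n y = rowOf n z := by
      rw [← row_eq_of_mem_GMTset ha, ← row_eq_of_mem_GMTset hb,
        extendTri_injOn n k hb.1.1 ha.1.1 hab]
    funext i
    rw [← rowOf_succ n y, h, rowOf_succ]
  rw [signedGMT, GMTset_succ]
  have := finsum_mem_biUnion (f := fun a => (-1 : ℚ) ^ scT (n + 1) a) hdisj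
    (admissibleRows n k).finite_toSet fun y _ => (GMTset_finite n y).image _
  simp only [Finset.mem_coe] at this
  rw [this, finsum_mem_finset_eq_sum, admissibleRows, Finset.sum_filter]
  refine Finset.sum_congr rfl fun y _ => ?_
  rw [rowWt_eq_ite, ite_mul, zero_mul]
  congr 1
  rw [finsum_mem_image ((extendTri_injOn n k).mono fun a ha => ha.1.1), signedGMT,
    mul_finsum_mem]
  refine finsum_mem_congr rfl fun a ha => ?_
  rw [scT_extendTri, row_eq_of_mem_GMTset ha, pow_add, mul_comm]

theorem vanishesOnTriples_signedGMT (n : ℕ) : VanishesOnTriples n (signedGMT n) := by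
  intro k j hj h₁ h₂
  suffices h : GMTset n k = ∅ by rw [signedGMT, h, finsum_mem_empty]
  rw [Set.eq_empty_iff_forall_notMem]
  intro a ha
  obtain ⟨i, rfl⟩ : ∃ i, n = i + 1 := ⟨n - 1, by omega⟩
  have hrow := row_eq_of_mem_GMTset ha
  obtain ⟨c1, c2, -⟩ := ((isGMT_iff _ _).1 ha.1).2 i le_rfl
  have e₀ := rowOf_succ _ k ⟨j, by omega⟩
  have e₁ := rowOf_succ _ k ⟨j + 1, by omega⟩
  have e₂ := rowOf_succ _ k ⟨j + 2, hj⟩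
  rw [← hrow] at e₀ e₁ e₂
  simp only at e₀ e₁ e₂
  have b₁ := c1 (j + 1) (by omega) (by omega)
  have b₂ := c1 (j + 2) (by omega) (by omega)
  have b := c2 (j + 1) (by omega) (by omega)
  rw [e₀, e₁, h₁] at b₁
  rw [e₁, e₂, h₂] at b₂
  rw [e₀, e₁, h₁] at b
  have e₃ : a (i + 1) (j + 1 + 2) = k ⟨j + 2, hj⟩ := e₂
  have := b le_rfl (by rw [e₃, h₂])
  simp only [min_self, max_self] at b₁ b₂
  have e₄ : a i (j + 1 + 1) = a i (j + 2) := rfl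
  omega

theorem signedGMT_succ (n : ℕ) (k : Fin (n + 1) → ℤ) :
    signedGMT (n + 1) k = rowOp n k (signedGMT n) := by
  rw [signedGMT_succ_eq_sum, sum_rowWt_start n k _ (vanishesOnTriples_signedGMT n)]

theorem isPolyFun_signedGMT (n : ℕ) : IsPolyFun n (signedGMT n) := by
  induction n with
  | zero =>
    refine ⟨MvPolynomial.C (signedGMT 0 default), fun k => ?_⟩
    rw [MvPolynomial.eval_C, Subsingleton.elim k default]
  | succ n ih =>
    rw [funext (signedGMT_succ n)]
    exact ih.rowOp

theorem isMT_of_isGMT_of_strictMono {n : ℕ} {a : ℕ → ℕ → ℤ} {k : Fin n → ℤ} (hk : StrictMono k)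
    (ha : a ∈ GMTset n k) : IsMT n a := by
  obtain ⟨htri, hcond⟩ := (isGMT_iff _ _).1 ha.1
  have hrow := row_eq_of_mem_GMTset ha
  have strict : ∀ d i, i + d = n → ∀ j, 1 ≤ j → j + 1 ≤ i → a i j < a i (j + 1) := by
    intro d
    induction d with
    | zero =>
      intro i hi j hj hj'
      obtain rfl : i = n := by omega
      rw [hrow, rowOf, rowOf, dif_pos (by omega), dif_pos (by omega)]
      exact hk (Fin.mk_lt_mk.2 (by omega))
    | succ d ih =>
      intro i hi j hj hj'
      exact (hcond i (by omega)).2.1 j hj hj' (ih (i + 1) (by omega) j hj (by omega)).le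
        (ih (i + 1) (by omega) (j + 1) (by omega) (by omega)).le
  refine ⟨htri, fun i j hj hj' hi => strict (n - i) i (by omega) j hj hj',
    fun i j hj hj' hi => ?_⟩
  have h := (hcond i hi).1 j hj hj'
  have := strict (n - (i + 1)) (i + 1) (by omega) j hj (by omega)
  rwa [min_eq_left this.le, max_eq_right this.le] at h

theorem IsMT.isGMT {n : ℕ} {a : ℕ → ℕ → ℤ} (ha : IsMT n a) : IsGMT n a := by
  obtain ⟨h0, h1, h2⟩ := ha
  refine ⟨h0, fun i j hj hj' hi => ?_, fun i j hj hj' hi _ _ => h1 i j hj hj' (by omega),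
    fun i j hj hj' hi => ?_⟩
  · exact ⟨min_le_of_left_le (h2 i j hj hj' hi).1, le_max_of_le_right (h2 i j hj hj' hi).2⟩
  · have := h1 (i + 1) j hj (by omega) hi
    constructor <;> intros <;> omega

theorem IsMT.scT_eq_zero {n : ℕ} {a : ℕ → ℕ → ℤ} (ha : IsMT n a) : scT n a = 0 := by
  obtain ⟨h0, h1, h2⟩ := ha
  rw [scT, Nat.add_eq_zero_iff, Finset.card_eq_zero, Finset.card_eq_zero, newcomersF, scPairsF,
    Finset.filter_eq_empty_iff, Finset.filter_eq_empty_iff]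
  constructor
  · rintro ⟨i, j⟩ - ⟨hj, hj', hi, h⟩
    have := h1 (i + 1) j hj (by simp at hj'; omega) hi
    simp only at h
    omega
  · rintro ⟨i, j⟩ - ⟨hj, hj', hi, h, -⟩
    have := h1 i j hj hj' (by simp at hi; omega)
    simp only at h
    omega

theorem signedGMT_of_strictMono {n : ℕ} {k : Fin n → ℤ} (hk : StrictMono k) :
    signedGMT n k = ((MTset n k).ncard : ℚ) := by
  have h : GMTset n k = MTset n k := Set.ext fun a =>
    ⟨fun ha => ⟨isMT_of_isGMT_of_strictMono hk ha, ha.2⟩, fun ha => ⟨ha.1.isGMT, ha.2⟩⟩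
  have hfin := GMTset_finite n k
  rw [h] at hfin
  rw [signedGMT, h, finsum_mem_congr rfl fun a ha => by rw [ha.1.scT_eq_zero, pow_zero],
    finsum_mem_eq_finite_toFinset_sum _ hfin, Finset.sum_const, Set.ncard_eq_toFinset_card _ hfin]
  simp

/-- For every `n ≥ 1` and every integer tuple `k`, the polynomial `α` satisfies
`α(n;k) = Σ_{A ∈ 𝒢ₙ(k)} (-1)^{sc(A)}`. -/
theorem alpha_eq_signed_sum_GMT (n : ℕ) (hn : 1 ≤ n)
    (α : (Fin n → ℤ) → ℚ) (hα : IsAlpha n α) (k : Fin n → ℤ) :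
    α k = ∑ᶠ a ∈ GMTset n k, ((-1 : ℚ)) ^ (scT n a) := by
  obtain ⟨⟨P, -, hP⟩, hmono⟩ := hα
  exact IsPolyFun.eq_of_strictMono ⟨P, hP⟩ (isPolyFun_signedGMT n)
    (fun x hx => (hmono x hx).trans (signedGMT_of_strictMono hx).symm) k
end

section
/- For every n ≥ 1 and every (k_1,…,k_n) ∈ ℤ^n: the set of triangular arrays underlying those elements of 𝒯_n(k_1,…,k_n) that satisfy the condition 'a_{i,j−1} ≤ a_{i,j} ≤ a_{i,j+1} implies a_{i−1,j−1} < a_{i−1,j}' is exactly 𝒢_n(k_1,…,k_n); in each such element the special entries are exactly the entries a_{i,j} with a_{i−1,j−1} = a_{i,j} = a_{i−1,j}, the inversions are exactly the newcomers, the special entries correspond exactly to the sign-changing pairs, and hence s(A) = sc(A) for each such A. -/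
/-- Conditions on a triangular array `a` of size `n` together with a set `S` of
special entries (positions `(i,j)` with `1 < j < i ≤ n`, no two adjacent in the
same row): special entries equal both their parents, and every entry that is
not a parent of a special entry lies weakly between its two lower neighbours if
they weakly increase, and strictly between them if they strictly decrease (in
which case it is an inversion). -/
def SpecOK (n : ℕ) (a : ℕ → ℕ → ℤ) (S : Finset (ℕ × ℕ)) : Prop :=
  (∀ p ∈ S, 1 < p.2 ∧ p.2 < p.1 ∧ p.1 ≤ n) ∧
  (∀ p ∈ S, ∀ q ∈ S, p.1 = q.1 → q.2 ≠ p.2 + 1) ∧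
  (∀ p ∈ S, a (p.1 - 1) (p.2 - 1) = a p.1 p.2 ∧ a (p.1 - 1) p.2 = a p.1 p.2) ∧
  (∀ i j, 1 ≤ j → j ≤ i → i + 1 ≤ n → (i + 1, j) ∉ S → (i + 1, j + 1) ∉ S →
    (a (i + 1) j ≤ a (i + 1) (j + 1) →
      a (i + 1) j ≤ a i j ∧ a i j ≤ a (i + 1) (j + 1)) ∧
    (a (i + 1) (j + 1) < a (i + 1) j →
      a (i + 1) (j + 1) < a i j ∧ a i j < a (i + 1) j))

/-- An element of `𝒯ₙ`: a triangular array together with an admissible set of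
special entries. -/
def IsTArr (n : ℕ) (a : ℕ → ℕ → ℤ) (S : Finset (ℕ × ℕ)) : Prop :=
  IsTri n a ∧ SpecOK n a S

/-- The positions of inversions of an element of `𝒯ₙ`: entries that are not
parents of special entries and whose two lower neighbours strictly decrease. -/
def invF (n : ℕ) (a : ℕ → ℕ → ℤ) (S : Finset (ℕ × ℕ)) : Finset (ℕ × ℕ) :=
  ((Finset.range (n + 1)) ×ˢ (Finset.range (n + 1))).filter (fun p =>
    1 ≤ p.2 ∧ p.2 ≤ p.1 ∧ p.1 + 1 ≤ n ∧
    (p.1 + 1, p.2) ∉ S ∧ (p.1 + 1, p.2 + 1) ∉ S ∧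
    a (p.1 + 1) (p.2 + 1) < a (p.1 + 1) p.2)

/-- `s(A)`: the total number of special entries and inversions. -/
def sT (n : ℕ) (a : ℕ → ℕ → ℤ) (S : Finset (ℕ × ℕ)) : ℕ :=
  S.card + (invF n a S).card

/-- The set `𝒯ₙ(k)` of triangular arrays with special entries and bottom row `k`. -/
def TSet (n : ℕ) (k : Fin n → ℤ) : Set ((ℕ → ℕ → ℤ) × Finset (ℕ × ℕ)) :=
  {A | IsTArr n A.1 A.2 ∧ BottomRow n A.1 k}

/-- The condition `a_{i,j-1} ≤ a_{i,j} ≤ a_{i,j+1} → a_{i-1,j-1} < a_{i-1,j}`. -/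
def StrictCond (n : ℕ) (a : ℕ → ℕ → ℤ) : Prop :=
  ∀ i j, 2 ≤ j → j + 1 ≤ i → i ≤ n →
    a i (j - 1) ≤ a i j → a i j ≤ a i (j + 1) → a (i - 1) (j - 1) < a (i - 1) j

/-- The positions of the entries of a triangular array that equal both their parents. -/
def equalParentsF (n : ℕ) (a : ℕ → ℕ → ℤ) : Finset (ℕ × ℕ) :=
  ((Finset.range (n + 1)) ×ˢ (Finset.range (n + 1))).filter (fun p =>
    1 < p.2 ∧ p.2 < p.1 ∧ p.1 ≤ n ∧
    a (p.1 - 1) (p.2 - 1) = a p.1 p.2 ∧ a (p.1 - 1) p.2 = a p.1 p.2)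

theorem mem_equalParentsF_succ {n : ℕ} {a : ℕ → ℕ → ℤ} {i j : ℕ} :
    (i + 1, j + 1) ∈ equalParentsF n a ↔
      1 ≤ j ∧ j + 1 ≤ i ∧ i + 1 ≤ n ∧
        a i j = a (i + 1) (j + 1) ∧ a i (j + 1) = a (i + 1) (j + 1) := by
  simp only [equalParentsF, Finset.mem_filter, Finset.mem_product, Finset.mem_range,
    Nat.add_sub_cancel]
  grind

theorem equalParentsF_eq_image_scPairsF (n : ℕ) (a : ℕ → ℕ → ℤ) :
    equalParentsF n a = (scPairsF n a).image (fun p => (p.1 + 1, p.2 + 1)) := by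
  ext ⟨i, j⟩
  rcases i with _ | i
  · simp [equalParentsF]
  rcases j with _ | j
  · simp [equalParentsF]
  simp only [mem_equalParentsF_succ, scPairsF, Finset.mem_image, Finset.mem_filter,
    Finset.mem_product, Finset.mem_range, Prod.exists, Prod.mk.injEq, Nat.add_right_cancel_iff]
  constructor
  · intro h
    exact ⟨i, j, by grind, rfl, rfl⟩
  · rintro ⟨i', j', h, rfl, rfl⟩
    grind

theorem strictCond_iff {n : ℕ} {a : ℕ → ℕ → ℤ} :
    StrictCond n a ↔ ∀ i j, 1 ≤ j → j + 1 ≤ i → i + 1 ≤ n →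
      a (i + 1) j ≤ a (i + 1) (j + 1) → a (i + 1) (j + 1) ≤ a (i + 1) (j + 2) →
      a i j < a i (j + 1) := by
  constructor
  · intro h i j hj hji hin
    exact h (i + 1) (j + 1) (by omega) (by omega) hin
  · intro h i j hj hji hin
    obtain ⟨i, rfl⟩ : ∃ m, i = m + 1 := ⟨i - 1, by omega⟩
    obtain ⟨j, rfl⟩ : ∃ m, j = m + 1 := ⟨j - 1, by omega⟩
    exact h i j (by omega) (by omega) hin

theorem SpecOK.apply_parents {n : ℕ} {a : ℕ → ℕ → ℤ} {S : Finset (ℕ × ℕ)} (h : SpecOK n a S)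
    {i j : ℕ} (hS : (i + 1, j) ∈ S) :
    2 ≤ j ∧ j ≤ i ∧ i + 1 ≤ n ∧ a i (j - 1) = a (i + 1) j ∧ a i j = a (i + 1) j := by
  have h1 := h.1 _ hS
  have h2 := h.2.2.1 _ hS
  simp only [Nat.add_sub_cancel] at h1 h2
  omega

theorem SpecOK.isGMT {n : ℕ} {a : ℕ → ℕ → ℤ} {S : Finset (ℕ × ℕ)} (ht : IsTri n a)
    (h : SpecOK n a S) (hs : StrictCond n a) : IsGMT n a := by
  refine ⟨ht, fun i j hj hji hin => ?_, strictCond_iff.1 hs, fun i j hj hji hin => ?_⟩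
  all_goals
    have hbetween := h.2.2.2 i j hj hji hin
    by_cases hl : (i + 1, j) ∈ S
    · have := h.apply_parents hl
      grind
    · by_cases hr : (i + 1, j + 1) ∈ S
      · have := h.apply_parents hr
        simp only [Nat.add_sub_cancel] at this
        grind
      · grind

theorem SpecOK.eq_equalParentsF {n : ℕ} {a : ℕ → ℕ → ℤ} {S : Finset (ℕ × ℕ)}
    (h : SpecOK n a S) (hs : StrictCond n a) : S = equalParentsF n a := by
  ext ⟨i, j⟩
  constructor
  · intro hS
    have h1 := h.1 _ hS
    have h2 := h.2.2.1 _ hS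
    simp only [equalParentsF, Finset.mem_filter, Finset.mem_product, Finset.mem_range]
    grind
  · intro hE
    have hpos : 1 < j ∧ j < i := by
      simp only [equalParentsF, Finset.mem_filter] at hE
      exact ⟨hE.2.1, hE.2.2.1⟩
    obtain ⟨i, rfl⟩ : ∃ m, i = m + 1 := ⟨i - 1, by omega⟩
    obtain ⟨j, rfl⟩ : ∃ m, j = m + 1 := ⟨j - 1, by omega⟩
    obtain ⟨hj, hji, hin, hl, hr⟩ := mem_equalParentsF_succ.1 hE
    by_contra hS
    have hstrict := strictCond_iff.1 hs i j hj hji hin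
    have hleft := h.2.2.2 i j hj (by omega) hin
    have hright := h.2.2.2 i (j + 1) (by omega) hji hin hS
    have hleft' : (i + 1, j) ∈ S → a i j = a (i + 1) j :=
      fun hm => (h.apply_parents hm).2.2.2.2
    have hright' : (i + 1, j + 2) ∈ S → a i (j + 1) = a (i + 1) (j + 2) :=
      fun hm => (h.apply_parents hm).2.2.2.1
    grind

theorem SpecOK.invF_eq_newcomersF {n : ℕ} {a : ℕ → ℕ → ℤ} {S : Finset (ℕ × ℕ)}
    (h : SpecOK n a S) : invF n a S = newcomersF n a := by
  ext ⟨i, j⟩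
  simp only [invF, newcomersF, Finset.mem_filter]
  constructor
  · rintro ⟨hm, hj, hji, hin, hl, hr, hlt⟩
    have := (h.2.2.2 i j hj hji hin hl hr).2 hlt
    exact ⟨hm, hj, hji, hin, this.2, this.1⟩
  · rintro ⟨hm, hj, hji, hin, hlt, hgt⟩
    refine ⟨hm, hj, hji, hin, fun hl => ?_, fun hr => ?_, hgt.trans hlt⟩
    · exact hlt.ne (h.apply_parents hl).2.2.2.2
    · exact hgt.ne' (h.apply_parents hr).2.2.2.1

/-- No row of a generalized monotone triangle contains three consecutive equal
entries. -/
theorem IsGMT.not_three_equal {n : ℕ} {a : ℕ → ℕ → ℤ} (h : IsGMT n a) {i j : ℕ} (hj : 1 ≤ j)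
    (hji : j + 2 ≤ i) (hin : i ≤ n) (h1 : a i j = a i (j + 1))
    (h2 : a i (j + 1) = a i (j + 2)) : False := by
  obtain ⟨i, rfl⟩ : ∃ m, i = m + 1 := ⟨i - 1, by omega⟩
  have hlt := h.2.2.1 i j hj (by omega) hin h1.le h2.le
  have hl := h.2.1 i j hj (by omega) hin
  have hr := h.2.1 i (j + 1) (by omega) (by omega) hin
  grind

theorem IsGMT.specOK_equalParentsF {n : ℕ} {a : ℕ → ℕ → ℤ} (h : IsGMT n a) :
    SpecOK n a (equalParentsF n a) := by
  refine ⟨?_, ?_, ?_, ?_⟩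
  · intro p hp
    simp only [equalParentsF, Finset.mem_filter] at hp
    exact ⟨hp.2.1, hp.2.2.1, hp.2.2.2.1⟩
  · rintro ⟨i, j⟩ hp ⟨i', j'⟩ hq (rfl : i = i') (rfl : j' = j + 1)
    have hpos : 1 < j ∧ j < i := by
      simp only [equalParentsF, Finset.mem_filter] at hp
      exact ⟨hp.2.1, hp.2.2.1⟩
    obtain ⟨i, rfl⟩ : ∃ m, i = m + 1 := ⟨i - 1, by omega⟩
    obtain ⟨j, rfl⟩ : ∃ m, j = m + 1 := ⟨j - 1, by omega⟩
    rw [mem_equalParentsF_succ] at hp hq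
    obtain ⟨hj, -, hin, hp1, hp2⟩ := hp
    obtain ⟨-, hji, -, hq1, hq2⟩ := hq
    exact h.not_three_equal hj hji (by omega) (hp1.trans hp2.symm) (hq1.trans hq2.symm)
  · intro p hp
    simp only [equalParentsF, Finset.mem_filter] at hp
    exact hp.2.2.2.2
  · intro i j hj hji hin hl hr
    have hbetween := h.2.1 i j hj hji hin
    refine ⟨fun hle => by grind, fun hlt => ?_⟩
    obtain ⟨heql, heqr⟩ := h.2.2.2 i j hj hji hin
    have hne : a i j ≠ a (i + 1) j := by
      intro heq
      obtain ⟨hj2, hprev⟩ := heql heq hlt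
      obtain ⟨j, rfl⟩ : ∃ m, j = m + 1 := ⟨j - 1, by omega⟩
      exact hl (mem_equalParentsF_succ.2 ⟨by omega, hji, hin, hprev.trans heq, heq⟩)
    have hne' : a (i + 1) (j + 1) ≠ a i j := by
      intro heq
      obtain ⟨hji', hnext⟩ := heqr hlt heq
      exact hr (mem_equalParentsF_succ.2 ⟨hj, hji', hin, heq.symm, hnext.trans heq.symm⟩)
    grind

/-- The arrays underlying elements of `𝒯ₙ(k)` satisfying the extra condition
`a_{i,j-1} ≤ a_{i,j} ≤ a_{i,j+1} → a_{i-1,j-1} < a_{i-1,j}` are exactly the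
Generalized Monotone Triangles with bottom row `k`; in each such element the
special entries are exactly the entries equal to both parents, the inversions
are exactly the newcomers, the special entries correspond exactly to the
sign-changing pairs, and `s(A) = sc(A)`. -/
theorem TSet_strict_eq_GMT (n : ℕ) (hn : 1 ≤ n) (k : Fin n → ℤ) :
    ({a | ∃ S, (a, S) ∈ TSet n k ∧ StrictCond n a} = GMTset n k) ∧
    (∀ a S, (a, S) ∈ TSet n k → StrictCond n a →
      (S = ((Finset.range (n + 1)) ×ˢ (Finset.range (n + 1))).filter (fun p =>
            1 < p.2 ∧ p.2 < p.1 ∧ p.1 ≤ n ∧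
            a (p.1 - 1) (p.2 - 1) = a p.1 p.2 ∧ a (p.1 - 1) p.2 = a p.1 p.2)) ∧
      invF n a S = newcomersF n a ∧
      S = (scPairsF n a).image (fun p => (p.1 + 1, p.2 + 1)) ∧
      sT n a S = scT n a) := by
  refine ⟨Set.ext fun a => ⟨?_, ?_⟩, fun a S hA hs => ?_⟩
  · rintro ⟨S, ⟨⟨ht, hS⟩, hb⟩, hs⟩
    exact ⟨hS.isGMT ht hs, hb⟩
  · rintro ⟨hG, hb⟩
    exact ⟨equalParentsF n a, ⟨⟨hG.1, hG.specOK_equalParentsF⟩, hb⟩,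
      strictCond_iff.2 hG.2.2.1⟩
  · have hS : SpecOK n a S := hA.1.2
    have hE := hS.eq_equalParentsF hs
    have hI := hE.trans (equalParentsF_eq_image_scPairsF n a)
    refine ⟨hE, hS.invF_eq_newcomersF, hI, ?_⟩
    have hcard : S.card = (scPairsF n a).card := by
      rw [hI, Finset.card_image_of_injective]
      intro p q hpq
      simpa [Prod.ext_iff] using hpq
    rw [sT, scT, hS.invF_eq_newcomersF, hcard, add_comm]
end
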